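/- For every z in the upper half-plane ℍ, φ0(−1/z) = φ0(z) − (12i/π)(1/z)·φ_{−2}(z) − (36/π²)(1/z²)·φ_{−4}(z). -/

import Mathlib

open MeasureTheory

/-- Weight 2 Eisenstein series (quasimodular), via its `q`-expansion. -/
noncomputable def E2 (z : ℂ) : ℂ :=
  1 - 24 * ∑' n : ℕ+, ((ArithmeticFunction.sigma 1 n : ℕ) : ℂ) *
    Complex.exp (2 * (Real.pi : ℂ) * Complex.I * n * z)

/-- Weight 4 Eisenstein series, via its `q`-expansion. -/
noncomputable def E4 (z : ℂ) : ℂ :=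
  1 + 240 * ∑' n : ℕ+, ((ArithmeticFunction.sigma 3 n : ℕ) : ℂ) *
    Complex.exp (2 * (Real.pi : ℂ) * Complex.I * n * z)

/-- Weight 6 Eisenstein series, via its `q`-expansion. -/
noncomputable def E6 (z : ℂ) : ℂ :=
  1 - 504 * ∑' n : ℕ+, ((ArithmeticFunction.sigma 5 n : ℕ) : ℂ) *
    Complex.exp (2 * (Real.pi : ℂ) * Complex.I * n * z)

/-- The elliptic `j`-invariant. -/
noncomputable def jInv (z : ℂ) : ℂ := 1728 * E4 z ^ 3 / (E4 z ^ 3 - E6 z ^ 2)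

/-- The weakly holomorphic modular form `varphi_{-2}`. -/
noncomputable def varphim2 (z : ℂ) : ℂ := -1728 * E4 z * E6 z / (E4 z ^ 3 - E6 z ^ 2)

/-- The weakly holomorphic modular form `varphi_{-4}`. -/
noncomputable def varphim4 (z : ℂ) : ℂ := 1728 * E4 z ^ 2 / (E4 z ^ 3 - E6 z ^ 2)

/-- `φ_{-4} = varphi_{-4}`. -/
noncomputable def phim4 (z : ℂ) : ℂ := varphim4 z

/-- `φ_{-2} = varphi_{-4}·E2 + varphi_{-2}`. -/
noncomputable def phim2 (z : ℂ) : ℂ := varphim4 z * E2 z + varphim2 z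

/-- `φ_0 = varphi_{-4}·E2² + 2·varphi_{-2}·E2 + j − 1728`. -/
noncomputable def phi0 (z : ℂ) : ℂ :=
  varphim4 z * E2 z ^ 2 + 2 * varphim2 z * E2 z + jInv z - 1728

section helpers
open UpperHalfPlane

lemma aux_S (w : ℍ) : ((ModularGroup.S • w : ℍ) : ℂ) = -1 / (w : ℂ) := by
  rw [UpperHalfPlane.modular_S_smul]
  simp [neg_div, inv_neg]

lemma aux_E2 (w : ℍ) : EisensteinSeries.E2 w = E2 (w : ℂ) := by
  rw [EisensteinSeries.E2_eq_tsum_cexp, E2]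
  congr 2
  refine tsum_congr fun n => ?_
  rw [← Complex.exp_nat_mul]
  congr 2
  push_cast
  ring

lemma aux_E4 (w : ℍ) : ModularForm.E (k := 4) (by norm_num) w = E4 (w : ℂ) := by
  rw [EisensteinSeries.q_expansion_bernoulli _ ⟨2, rfl⟩, E4,
    show bernoulli 4 = -1 / 30 by decide +kernel]
  have : ∑' n : ℕ+, ((ArithmeticFunction.sigma (4-1) n : ℕ) : ℂ) * Complex.exp (2 * (Real.pi : ℂ) * Complex.I * w) ^ ((n : ℕ) : ℤ) = ∑' n : ℕ+, ((ArithmeticFunction.sigma 3 n : ℕ) : ℂ) *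
    Complex.exp (2 * (Real.pi : ℂ) * Complex.I * n * w) := by
    refine tsum_congr fun n => ?_
    rw [zpow_natCast, ← Complex.exp_nat_mul]
    congr 2
    ring
  rw [this]
  push_cast
  ring

lemma aux_E6 (w : ℍ) : ModularForm.E (k := 6) (by norm_num) w = E6 (w : ℂ) := by
  rw [EisensteinSeries.q_expansion_bernoulli _ ⟨3, rfl⟩, E6,
    show bernoulli 6 = 1 / 42 by decide +kernel]
  have : ∑' n : ℕ+, ((ArithmeticFunction.sigma (6-1) n : ℕ) : ℂ) * Complex.exp (2 * (Real.pi : ℂ) * Complex.I * w) ^ ((n : ℕ) : ℤ) = ∑' n : ℕ+, ((ArithmeticFunction.sigma 5 n : ℕ) : ℂ) *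
    Complex.exp (2 * (Real.pi : ℂ) * Complex.I * n * w) := by
    refine tsum_congr fun n => ?_
    rw [zpow_natCast, ← Complex.exp_nat_mul]
    congr 2
    ring
  rw [this]
  push_cast
  ring

lemma aux_T2 (w : ℍ) : E2 (-1 / (w : ℂ)) = (w : ℂ) ^ 2 * E2 w - 6 * Complex.I * w / Real.pi := by
  have hw : (w : ℂ) ≠ 0 := w.ne_zero
  have hpi : (Real.pi : ℂ) ≠ 0 := by exact_mod_cast Real.pi_ne_zero
  have h := EisensteinSeries.G2_S_transform w
  have hE : ∀ v : ℍ, EisensteinSeries.G2 v = (Real.pi : ℂ) ^ 2 / 3 * E2 v := by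
    intro v
    rw [← aux_E2, EisensteinSeries.E2, Pi.smul_apply, riemannZeta_two, smul_eq_mul]
    field_simp
    ring
  rw [hE, hE, aux_S] at h
  have h2 : E2 w = ((w : ℂ) ^ 2)⁻¹ * E2 (-1 / (w : ℂ)) + 6 * Complex.I / (Real.pi * w) := by
    apply mul_left_cancel₀ (show (Real.pi : ℂ) ^ 2 / 3 ≠ 0 from div_ne_zero (pow_ne_zero 2 hpi) (by norm_num))
    rw [h]
    field_simp
    ring
  rw [h2]
  field_simp
  ring

lemma aux_TE {k : ℕ} (hk : 3 ≤ k) (w : ℍ) :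
    ModularForm.E hk (ModularGroup.S • w) = (w : ℂ) ^ k * ModularForm.E hk w := by
  have : SlashInvariantFormClass (ModularForm (Matrix.SpecialLinearGroup.mapGL (R := ℤ) ℝ).range k)
      (CongruenceSubgroup.Gamma 1) k := by
    rw [CongruenceSubgroup.Gamma_one_coe_eq_SL]
    infer_instance
  have h := SlashInvariantForm.slash_action_eqn_SL'' (k := k) (Γ := CongruenceSubgroup.Gamma 1)
    (ModularForm.E hk) (CongruenceSubgroup.mem_Gamma_one ModularGroup.S) w
  simpa [ModularGroup.denom_S] using h

lemma aux_T4 (w : ℍ) : E4 (-1 / (w : ℂ)) = (w : ℂ) ^ 4 * E4 w := by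
  rw [← aux_S, ← aux_E4, ← aux_E4, aux_TE]

lemma aux_T6 (w : ℍ) : E6 (-1 / (w : ℂ)) = (w : ℂ) ^ 6 * E6 w := by
  rw [← aux_S, ← aux_E6, ← aux_E6, aux_TE]

end helpers

/-- The transformation rule `φ₀(−1/z) = φ₀(z) − (12i/π)(1/z)·φ₋₂(z) − (36/π²)(1/z²)·φ₋₄(z)`
for all `z` in the upper half-plane. -/
theorem phi0_transformation (z : ℂ) (hz : 0 < z.im) :
    phi0 (-1/z) =
      phi0 z - (12 * Complex.I / (Real.pi : ℂ)) * (1/z) * phim2 z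
        - (36 / (Real.pi : ℂ) ^ 2) * (1/z^2) * phim4 z := by
  have hz0 : z ≠ 0 := by
    rintro rfl
    simp at hz
  have hpi : (Real.pi : ℂ) ≠ 0 := by exact_mod_cast Real.pi_ne_zero
  have h2 : E2 (-1 / z) = z ^ 2 * E2 z - 6 * Complex.I * z / Real.pi := aux_T2 ⟨z, hz⟩
  have h4 : E4 (-1 / z) = z ^ 4 * E4 z := aux_T4 ⟨z, hz⟩
  have h6 : E6 (-1 / z) = z ^ 6 * E6 z := aux_T6 ⟨z, hz⟩
  have hD : (z ^ 4 * E4 z) ^ 3 - (z ^ 6 * E6 z) ^ 2 = z ^ 12 * (E4 z ^ 3 - E6 z ^ 2) := by ring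
  simp only [phi0, phim2, phim4, varphim2, varphim4, jInv, h2, h4, h6, hD]
  generalize E4 z ^ 3 - E6 z ^ 2 = D
  rcases eq_or_ne D 0 with rfl | hD0
  · simp
  field_simp
  ring_nf
  simp only [Complex.I_sq]
  ring
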